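/- Let β ∈ C^∞([0,1], S²) be an immersed curve (β'(t) ≠ 0 for all t), let θ ∈ ℝ, and let V ⊂ S² be an open neighbourhood of β([0,1]). Then there exists an immersed curve β̃ ∈ C^∞([0,1], V) which agrees with β in a neighbourhood of {0,1} and which satisfies Π_{β̃} v = R_{β(1)}^{(θ)}(Π_β v) for every v ∈ ℝ³ with v · β(0) = 0. -/

import Mathlib

open MeasureTheory Set Filter Matrix
open scoped RealInnerProductSpace Topology ENNReal NNReal

noncomputable section

/-- Euclidean 3-space. -/
abbrev E3 : Type := EuclideanSpace ℝ (Fin 3)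

/-- Cross product on `ℝ³`. -/
def cross3 (v w : E3) : E3 :=
  (WithLp.equiv 2 (Fin 3 → ℝ)).symm
    ![v 1 * w 2 - v 2 * w 1, v 2 * w 0 - v 0 * w 2, v 0 * w 1 - v 1 * w 0]

/-- The `i`-th row of a 3×3 matrix, as a vector in `ℝ³`; for `r ∈ SO(3)` this is `rᵀ eᵢ`. -/
def row3 (M : Matrix (Fin 3) (Fin 3) ℝ) (i : Fin 3) : E3 :=
  (WithLp.equiv 2 (Fin 3 → ℝ)).symm (M i)

/-- The set of rotation matrices. -/
def SO3 : Set (Matrix (Fin 3) (Fin 3) ℝ) :=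
  {M | M * Mᵀ = 1 ∧ M.det = 1}

/-- Lebesgue measure restricted to the unit interval `I = (0,1)`. -/
def muI : Measure ℝ := volume.restrict (Set.Ioo 0 1)

/-- `f` is absolutely continuous on `[a,b]` with (a.e.) derivative `f'` (fundamental theorem of
calculus form); this encodes `f ∈ W^{1,1}((a,b))` via its continuous representative. -/
def FTCOn (f f' : ℝ → E3) (a b : ℝ) : Prop :=
  IntervalIntegrable f' volume a b ∧
  ∀ t ∈ Set.Icc a b, f t = f a + ∫ s in a..t, f' s

/-- `V` is the parallel transport of `v` along the spherical curve `β` (with derivative `β'`)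
on `[a,b]`: the absolutely continuous solution of `V' = -(V·β')β`, `V a = v`, in integral form.
`V t` is the quantity denoted `Π_{β|_(a,t)} v`. -/
def IsParTrans (β β' : ℝ → E3) (a b : ℝ) (v : E3) (V : ℝ → E3) : Prop :=
  V a = v ∧
  IntervalIntegrable (fun s => ⟪V s, β' s⟫ • β s) volume a b ∧
  ∀ t ∈ Set.Icc a b, V t = v - ∫ s in a..t, ⟪V s, β' s⟫ • β s

lemma c3_0 (v w : E3) : cross3 v w 0 = v 1 * w 2 - v 2 * w 1 := rfl
lemma c3_1 (v w : E3) : cross3 v w 1 = v 2 * w 0 - v 0 * w 2 := rfl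
lemma c3_2 (v w : E3) : cross3 v w 2 = v 0 * w 1 - v 1 * w 0 := rfl

lemma inner3 (v w : E3) : ⟪v, w⟫ = v 0 * w 0 + v 1 * w 1 + v 2 * w 2 := by
  simp [PiLp.inner_apply, Fin.sum_univ_three]; ring

lemma cross_inner_left (v w : E3) : ⟪cross3 v w, v⟫ = 0 := by
  rw [inner3, c3_0, c3_1, c3_2]; ring

lemma cross_inner_right (v w : E3) : ⟪cross3 v w, w⟫ = 0 := by
  rw [inner3, c3_0, c3_1, c3_2]; ring

lemma cross_inner_self (v w : E3) :
    ⟪cross3 v w, cross3 v w⟫ = ⟪v, v⟫ * ⟪w, w⟫ - ⟪v, w⟫ ^ 2 := by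
  simp only [inner3, c3_0, c3_1, c3_2]; ring

lemma cross3_cross3 (v w : E3) : cross3 v (cross3 v w) = ⟪v, w⟫ • v - ⟪v, v⟫ • w := by
  rw [inner3, inner3 v v]
  ext i
  fin_cases i <;>
  simp [c3_0, c3_1, c3_2] <;> ring

lemma cross_comb (v x y : E3) (a b : ℝ) :
    cross3 v (a • x + b • y) = a • cross3 v x + b • cross3 v y := by
  ext i
  fin_cases i <;>
  simp [c3_0, c3_1, c3_2] <;> ring

lemma contDiffAt_cross {f g : ℝ → E3} {t : ℝ} {n : WithTop ℕ∞} (hf : ContDiffAt ℝ n f t)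
    (hg : ContDiffAt ℝ n g t) : ContDiffAt ℝ n (fun s => cross3 (f s) (g s)) t := by
  rw [contDiffAt_euclidean] at hf hg ⊢
  intro i
  fin_cases i
  · exact ((hf 1).mul (hg 2)).sub ((hf 2).mul (hg 1))
  · exact ((hf 2).mul (hg 0)).sub ((hf 0).mul (hg 2))
  · exact ((hf 0).mul (hg 1)).sub ((hf 1).mul (hg 0))

/-- Expansion of a vector in an orthonormal frame of 3-space. -/
lemma frame_expand {e₁ e₂ e₃ : E3} (h11 : ⟪e₁, e₁⟫ = 1) (h22 : ⟪e₂, e₂⟫ = 1)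
    (h33 : ⟪e₃, e₃⟫ = 1) (h12 : ⟪e₁, e₂⟫ = 0) (h13 : ⟪e₁, e₃⟫ = 0) (h23 : ⟪e₂, e₃⟫ = 0)
    (v : E3) : v = ⟪v, e₁⟫ • e₁ + ⟪v, e₂⟫ • e₂ + ⟪v, e₃⟫ • e₃ := by
  have ho : Orthonormal ℝ ![e₁, e₂, e₃] := by
    rw [orthonormal_iff_ite]
    intro i j
    have h21 := (real_inner_comm e₁ e₂).trans h12
    have h31 := (real_inner_comm e₁ e₃).trans h13
    have h32 := (real_inner_comm e₂ e₃).trans h23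
    fin_cases i <;> fin_cases j
    exacts [h11, h12, h13, h21, h22, h23, h31, h32, h33]
  obtain ⟨b, hb⟩ := (ho.comp (fun i : (univ : Set (Fin 3)) => i.1)
    Subtype.val_injective).exists_orthonormalBasis_extension_of_card_eq (v := ![e₁, e₂, e₃])
    (s := univ) (by simp)
  have h := b.sum_repr' v
  rw [Fin.sum_univ_three, hb 0 (mem_univ _), hb 1 (mem_univ _), hb 2 (mem_univ _)] at h
  simp only [Matrix.cons_val] at h
  rw [real_inner_comm e₁, real_inner_comm e₂, real_inner_comm e₃]
  exact h.symm

/-- A differentiable function that is constant on `[0,1]` has vanishing derivative there. -/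
lemma deriv_const_Icc {f : ℝ → ℝ} {c d t : ℝ} (ht : t ∈ Icc (0:ℝ) 1)
    (hf : HasDerivWithinAt f d (Icc 0 1) t) (hc : ∀ s ∈ Icc (0:ℝ) 1, f s = c) : d = 0 := by
  have h2 : HasDerivWithinAt f 0 (Icc 0 1) t :=
    (hasDerivWithinAt_const t (Icc (0:ℝ) 1) c).congr hc (hc t ht)
  exact (uniqueDiffOn_Icc (zero_lt_one) t ht).eq_deriv _ hf h2

lemma const_Icc {f : ℝ → ℝ} (hf : ∀ t ∈ Icc (0:ℝ) 1, HasDerivWithinAt f 0 (Icc 0 1) t) :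
    ∀ t ∈ Icc (0:ℝ) 1, f t = f 0 := by
  apply constant_of_derivWithin_zero
  · exact fun t ht => (hf t ht).differentiableWithinAt
  · intro t ht
    exact (hf t ⟨ht.1, ht.2.le⟩).derivWithin
      (uniqueDiffOn_Icc (zero_lt_one) t ⟨ht.1, ht.2.le⟩)

lemma ftc_Icc {E : Type*} [NormedAddCommGroup E] [NormedSpace ℝ E] [CompleteSpace E]
    {g : ℝ → E} (hg : ContinuousOn g (Icc 0 1)) {t : ℝ} (ht : t ∈ Icc (0:ℝ) 1) :
    HasDerivWithinAt (fun x => ∫ s in (0:ℝ)..x, g s) (g t) (Icc 0 1) t := by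
  set h : ℝ → E := IccExtend zero_le_one (fun x : Icc (0:ℝ) 1 => g x) with hh
  have hc : Continuous h := (continuousOn_iff_continuous_domRestrict.1 hg).Icc_extend'
  have he : ∀ x ∈ Icc (0:ℝ) 1, h x = g x := fun x hx => by
    rw [hh, IccExtend_of_mem _ _ hx]
  have hd : HasDerivWithinAt (fun x => ∫ s in (0:ℝ)..x, h s) (h t) (Icc 0 1) t :=
    (intervalIntegral.integral_hasDerivAt_right (hc.intervalIntegrable _ _)
      hc.stronglyMeasurable.stronglyMeasurableAtFilter hc.continuousAt).hasDerivWithinAt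
  have hi : ∀ x ∈ Icc (0:ℝ) 1, ∫ s in (0:ℝ)..x, g s = ∫ s in (0:ℝ)..x, h s := by
    intro x hx
    apply intervalIntegral.integral_congr
    intro s hs
    rw [uIcc_of_le hx.1] at hs
    exact (he s ⟨hs.1, hs.2.trans hx.2⟩).symm
  rw [← he t ht]
  exact hd.congr hi (hi t ht)

lemma parTrans_hasDeriv {γ γ' : ℝ → E3} {v : E3} {V : ℝ → E3}
    (hγ : ContinuousOn γ (Icc 0 1)) (hγ' : ContinuousOn γ' (Icc 0 1))
    (h : IsParTrans γ γ' 0 1 v V) : ∀ t ∈ Icc (0:ℝ) 1,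
      HasDerivWithinAt V (-(⟪V t, γ' t⟫ • γ t)) (Icc 0 1) t := by
  obtain ⟨h0, hInt, hV⟩ := h
  have hVc : ContinuousOn V (Icc 0 1) := by
    have h1 : ContinuousOn (fun x => v - ∫ s in (0:ℝ)..x, ⟪V s, γ' s⟫ • γ s) (Icc 0 1) := by
      have := intervalIntegral.continuousOn_primitive_interval' hInt left_mem_uIcc
      rw [uIcc_of_le zero_le_one] at this
      exact continuousOn_const.sub this
    exact h1.congr hV
  have hg : ContinuousOn (fun s => ⟪V s, γ' s⟫ • γ s) (Icc 0 1) := 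
    ContinuousOn.smul (f := fun s => ⟪V s, γ' s⟫) (hVc.inner hγ') hγ
  intro t ht
  exact ((ftc_Icc hg ht).const_sub v).congr hV (hV t ht)

/-- Parallel transport expressed in a moving orthonormal frame. -/
lemma parTrans_frame {γ γ' E₁ E₁' E₂ E₂' : ℝ → E3} {ω : ℝ → ℝ} {v : E3} {V : ℝ → E3}
    (dγ : ∀ t ∈ Icc (0:ℝ) 1, HasDerivWithinAt γ (γ' t) (Icc 0 1) t)
    (cγ' : ContinuousOn γ' (Icc 0 1))
    (dE₁ : ∀ t ∈ Icc (0:ℝ) 1, HasDerivWithinAt E₁ (E₁' t) (Icc 0 1) t)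
    (dE₂ : ∀ t ∈ Icc (0:ℝ) 1, HasDerivWithinAt E₂ (E₂' t) (Icc 0 1) t)
    (h11 : ∀ t ∈ Icc (0:ℝ) 1, ⟪E₁ t, E₁ t⟫ = 1)
    (h22 : ∀ t ∈ Icc (0:ℝ) 1, ⟪E₂ t, E₂ t⟫ = 1)
    (h33 : ∀ t ∈ Icc (0:ℝ) 1, ⟪γ t, γ t⟫ = 1)
    (h12 : ∀ t ∈ Icc (0:ℝ) 1, ⟪E₁ t, E₂ t⟫ = 0)
    (h13 : ∀ t ∈ Icc (0:ℝ) 1, ⟪E₁ t, γ t⟫ = 0)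
    (h23 : ∀ t ∈ Icc (0:ℝ) 1, ⟪E₂ t, γ t⟫ = 0)
    (hω : Continuous ω) (hωE : ∀ t ∈ Icc (0:ℝ) 1, ⟪E₁' t, E₂ t⟫ = ω t)
    (hv : ⟪v, γ 0⟫ = 0) (h : IsParTrans γ γ' 0 1 v V) :
    V 1 = (Real.cos (∫ s in (0:ℝ)..1, ω s) * ⟪v, E₁ 0⟫
            + Real.sin (∫ s in (0:ℝ)..1, ω s) * ⟪v, E₂ 0⟫) • E₁ 1
        + (Real.cos (∫ s in (0:ℝ)..1, ω s) * ⟪v, E₂ 0⟫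
            - Real.sin (∫ s in (0:ℝ)..1, ω s) * ⟪v, E₁ 0⟫) • E₂ 1 := by
  have hV0 : V 0 = v := h.1
  have dV := parTrans_hasDeriv (fun t ht => (dγ t ht).continuousWithinAt) cγ' h
  have m0 : (0:ℝ) ∈ Icc (0:ℝ) 1 := by simp
  have m1 : (1:ℝ) ∈ Icc (0:ℝ) 1 := by simp
  have hperp : ∀ t ∈ Icc (0:ℝ) 1, ⟪V t, γ t⟫ = 0 := by
    intro t ht
    rw [const_Icc (f := fun t => ⟪V t, γ t⟫) _ t ht, hV0, hv]
    intro t ht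
    have := (dV t ht).inner ℝ (dγ t ht)
    refine this.congr_deriv ?_
    rw [inner_neg_left, real_inner_smul_left, h33 t ht]; ring
  have hexp : ∀ t ∈ Icc (0:ℝ) 1, V t = ⟪V t, E₁ t⟫ • E₁ t + ⟪V t, E₂ t⟫ • E₂ t := by
    intro t ht
    have := frame_expand (h11 t ht) (h22 t ht) (h33 t ht) (h12 t ht) (h13 t ht) (h23 t ht) (V t)
    rw [hperp t ht, zero_smul, add_zero] at this
    exact this
  have d11 : ∀ t ∈ Icc (0:ℝ) 1, ⟪E₁ t, E₁' t⟫ = 0 := by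
    intro t ht
    have := deriv_const_Icc ht ((dE₁ t ht).inner ℝ (dE₁ t ht)) h11
    rw [real_inner_comm (E₁ t)] at this
    linarith
  have d22 : ∀ t ∈ Icc (0:ℝ) 1, ⟪E₂ t, E₂' t⟫ = 0 := by
    intro t ht
    have := deriv_const_Icc ht ((dE₂ t ht).inner ℝ (dE₂ t ht)) h22
    rw [real_inner_comm (E₂ t)] at this
    linarith
  have d12 : ∀ t ∈ Icc (0:ℝ) 1, ⟪E₁ t, E₂' t⟫ = - ω t := by
    intro t ht
    have := deriv_const_Icc ht ((dE₁ t ht).inner ℝ (dE₂ t ht)) h12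
    rw [hωE t ht] at this
    linarith
  have dp : ∀ t ∈ Icc (0:ℝ) 1, HasDerivWithinAt (fun t => ⟪V t, E₁ t⟫)
      (ω t * ⟪V t, E₂ t⟫) (Icc 0 1) t := by
    intro t ht
    have := (dV t ht).inner ℝ (dE₁ t ht)
    refine this.congr_deriv ?_
    rw [inner_neg_left, real_inner_smul_left, real_inner_comm (E₁ t), h13 t ht]
    rw [show ⟪V t, E₁' t⟫ = ⟪⟪V t, E₁ t⟫ • E₁ t + ⟪V t, E₂ t⟫ • E₂ t, E₁' t⟫ by rw [← hexp t ht]]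
    simp only [inner_add_left, real_inner_smul_left]
    rw [d11 t ht, real_inner_comm (E₁' t), hωE t ht]; ring
  have dq : ∀ t ∈ Icc (0:ℝ) 1, HasDerivWithinAt (fun t => ⟪V t, E₂ t⟫)
      (- (ω t * ⟪V t, E₁ t⟫)) (Icc 0 1) t := by
    intro t ht
    have := (dV t ht).inner ℝ (dE₂ t ht)
    refine this.congr_deriv ?_
    rw [inner_neg_left, real_inner_smul_left, real_inner_comm (E₂ t), h23 t ht]
    rw [show ⟪V t, E₂' t⟫ = ⟪⟪V t, E₁ t⟫ • E₁ t + ⟪V t, E₂ t⟫ • E₂ t, E₂' t⟫ by rw [← hexp t ht]]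
    simp only [inner_add_left, real_inner_smul_left]
    rw [d22 t ht, d12 t ht]; ring
  set Θ : ℝ → ℝ := fun x => ∫ s in (0:ℝ)..x, ω s with hΘ
  have dΘ : ∀ t ∈ Icc (0:ℝ) 1, HasDerivWithinAt Θ (ω t) (Icc 0 1) t :=
    fun t ht => ftc_Icc hω.continuousOn ht
  have hΘ0 : Θ 0 = 0 := by simp [hΘ]
  have hP := const_Icc (f := fun t => Real.cos (Θ t) * ⟪V t, E₁ t⟫ - Real.sin (Θ t) * ⟪V t, E₂ t⟫)
    (by
      intro t ht
      have := ((dΘ t ht).cos.mul (dp t ht)).sub ((dΘ t ht).sin.mul (dq t ht))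
      refine this.congr_deriv ?_
      ring) 1 m1
  have hQ := const_Icc (f := fun t => Real.sin (Θ t) * ⟪V t, E₁ t⟫ + Real.cos (Θ t) * ⟪V t, E₂ t⟫)
    (by
      intro t ht
      have := ((dΘ t ht).sin.mul (dp t ht)).add ((dΘ t ht).cos.mul (dq t ht))
      refine this.congr_deriv ?_
      ring) 1 m1
  simp only [hΘ0, Real.cos_zero, Real.sin_zero, one_mul, zero_mul, sub_zero, zero_add, hV0] at hP hQ
  have hcs := Real.sin_sq_add_cos_sq (Θ 1)
  change V 1 = (Real.cos (Θ 1) * ⟪v, E₁ 0⟫ + Real.sin (Θ 1) * ⟪v, E₂ 0⟫) • E₁ 1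
        + (Real.cos (Θ 1) * ⟪v, E₂ 0⟫ - Real.sin (Θ 1) * ⟪v, E₁ 0⟫) • E₂ 1
  rw [← hP, ← hQ]
  conv_lhs => rw [hexp 1 m1]
  congr 2
  · linear_combination (-⟪V 1, E₁ 1⟫) * hcs
  · linear_combination (-⟪V 1, E₂ 1⟫) * hcs


/-- A planar family of immersed curves `(x + A x, B x)` with many loops. -/
lemma planar_loops : ∃ M₀ : ℝ, ∀ L : ℝ, ∃ A A' B B' p q : ℝ → ℝ,
    ContDiff ℝ (⊤ : ℕ∞) A ∧ ContDiff ℝ (⊤ : ℕ∞) B ∧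
    (∀ x, HasDerivAt A (A' x) x) ∧ (∀ x, HasDerivAt B (B' x) x) ∧
    Continuous p ∧ Continuous q ∧
    (∀ x, x ≤ -2 ∨ 3 ≤ x → A x = 0 ∧ B x = 0) ∧
    (∀ x, |A x| ≤ 2) ∧ (∀ x, |B x| ≤ 1) ∧
    (∀ x, 1 + A' x = p x - q x * B x) ∧ (∀ x, |p x| ≤ M₀) ∧ (∀ x, 0 ≤ q x) ∧
    L ≤ ∫ x in (-8:ℝ)..8, q x * B x ^ 2 ∧
    (∀ x, 1 + A' x = 0 → B' x ≠ 0) := by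
  set S : ℝ → ℝ := Real.smoothTransition with hS
  have cS : ContDiff ℝ (⊤ : ℕ∞) S := Real.smoothTransition.contDiff
  have S0 : ∀ x, x ≤ 0 → S x = 0 := fun x hx => Real.smoothTransition.zero_of_nonpos hx
  have S1 : ∀ x, 1 ≤ x → S x = 1 := fun x hx => Real.smoothTransition.one_of_one_le hx
  have Sn : ∀ x, 0 ≤ S x := Real.smoothTransition.nonneg
  have Sl : ∀ x, S x ≤ 1 := Real.smoothTransition.le_one
  set χ : ℝ → ℝ := fun x => S (x + 1) * S (3 - 2 * x) with hχ
  set η : ℝ → ℝ := fun x => S (x + 2) * S (3 - x) with hη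
  have cχ : ContDiff ℝ (⊤ : ℕ∞) χ := by
    apply ContDiff.mul
    · exact cS.comp (by fun_prop)
    · exact cS.comp (by fun_prop)
  have cη : ContDiff ℝ (⊤ : ℕ∞) η := by
    apply ContDiff.mul
    · exact cS.comp (by fun_prop)
    · exact cS.comp (by fun_prop)
  have χn : ∀ x, 0 ≤ χ x := fun x => mul_nonneg (Sn _) (Sn _)
  have χl : ∀ x, χ x ≤ 1 := fun x => mul_le_one₀ (Sl _) (Sn _) (Sl _)
  have ηn : ∀ x, 0 ≤ η x := fun x => mul_nonneg (Sn _) (Sn _)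
  have ηl : ∀ x, η x ≤ 1 := fun x => mul_le_one₀ (Sl _) (Sn _) (Sl _)
  have χz : ∀ x, x ≤ -1 ∨ 3 / 2 ≤ x → χ x = 0 := by
    rintro x (h | h)
    · simp only [hχ]; rw [S0 (x + 1) (by linarith), zero_mul]
    · simp only [hχ]; rw [S0 (3 - 2 * x) (by linarith), mul_zero]
  have χo : ∀ x, 0 ≤ x → x ≤ 1 → χ x = 1 := by
    intro x h0 h1
    simp only [hχ]; rw [S1 (x + 1) (by linarith), S1 (3 - 2 * x) (by linarith), one_mul]
  have ηz : ∀ x, x ≤ -2 ∨ 3 ≤ x → η x = 0 := by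
    rintro x (h | h)
    · simp only [hη]; rw [S0 (x + 2) (by linarith), zero_mul]
    · simp only [hη]; rw [S0 (3 - x) (by linarith), mul_zero]
  have ηo : ∀ x, χ x ≠ 0 → η x = 1 := by
    intro x hx
    have h1 : ¬ (x ≤ -1 ∨ 3 / 2 ≤ x) := fun h => hx (χz x h)
    push Not at h1
    simp only [hη]; rw [S1 (x + 2) (by linarith), S1 (3 - x) (by linarith), one_mul]
  have dχ : ∀ x, HasDerivAt χ (deriv χ x) x := fun x =>
    (cχ.differentiable (by simp)).differentiableAt.hasDerivAt
  have dη : ∀ x, HasDerivAt η (deriv η x) x := fun x =>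
    (cη.differentiable (by simp)).differentiableAt.hasDerivAt
  have dS : ∀ x, HasDerivAt S (deriv S x) x := fun x =>
    (cS.differentiable (by simp)).differentiableAt.hasDerivAt
  have cdχ : Continuous (deriv χ) := cχ.continuous_deriv (by simp)
  have cdS : Continuous (deriv S) := cS.continuous_deriv (by simp)
  have dSn : ∀ x, 0 ≤ deriv S x := fun x => Real.smoothTransition.monotone.deriv_nonneg
  have dχ0 : ∀ x, χ x = 0 → deriv χ x = 0 := by
    intro x hx
    apply IsLocalMin.deriv_eq_zero
    exact Eventually.of_forall fun y => by rw [hx]; exact χn y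
  have dχ1 : ∀ x, χ x = 1 → deriv χ x = 0 := by
    intro x hx
    apply IsLocalMax.deriv_eq_zero
    exact Eventually.of_forall fun y => by rw [hx]; exact χl y
  have dη1 : ∀ x, η x = 1 → deriv η x = 0 := by
    intro x hx
    apply IsLocalMax.deriv_eq_zero
    exact Eventually.of_forall fun y => by rw [hx]; exact ηl y
  have hcs : HasCompactSupport χ := by
    apply HasCompactSupport.of_support_subset_isCompact (isCompact_Icc (a := (-1:ℝ)) (b := 3 / 2))
    intro x hx
    by_contra h
    rw [mem_Icc, not_and_or] at h
    push Not at h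
    exact hx (χz x (h.imp le_of_lt le_of_lt))
  obtain ⟨C, hC⟩ := cdχ.bounded_above_of_compact_support hcs.deriv
  refine ⟨1 + 2 * C, fun L => ?_⟩
  obtain ⟨N, hN⟩ := exists_nat_ge L
  set ψ : ℝ → ℝ := fun x => x + N * (2 * Real.pi) * S x with hψ
  set ψ' : ℝ → ℝ := fun x => 1 + N * (2 * Real.pi) * deriv S x with hψ'
  have cψ : ContDiff ℝ (⊤ : ℕ∞) ψ := contDiff_id.add (contDiff_const.mul cS)
  have dψ : ∀ x, HasDerivAt ψ (ψ' x) x := fun x =>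
    (hasDerivAt_id x).add ((dS x).const_mul _)
  have cψ' : Continuous ψ' := by fun_prop
  have ψ'1 : ∀ x, 1 ≤ ψ' x := fun x => by
    have := dSn x
    have := Real.pi_pos
    simp only [hψ']
    have : 0 ≤ N * (2 * Real.pi) * deriv S x := by positivity
    linarith
  have hcos : ∀ x, Real.cos (ψ x) = 0 → χ x = 0 ∨ χ x = 1 := by
    intro x hx
    have hpi := Real.pi_gt_d2
    rcases le_or_gt x (-1) with h1 | h1
    · exact Or.inl (χz x (Or.inl h1))
    rcases le_or_gt (3/2) x with h2 | h2
    · exact Or.inl (χz x (Or.inr h2))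
    rcases le_or_gt 0 x with h3 | h3
    · rcases le_or_gt x 1 with h4 | h4
      · exact Or.inr (χo x h3 h4)
      · exfalso
        simp only [hψ] at hx
        rw [S1 x h4.le, mul_one, Real.cos_add_nat_mul_two_pi] at hx
        have := Real.cos_pos_of_mem_Ioo (x := x) ⟨by linarith, by linarith⟩
        linarith
    · exfalso
      simp only [hψ] at hx
      rw [S0 x h3.le, mul_zero, add_zero] at hx
      have := Real.cos_pos_of_mem_Ioo (x := x) ⟨by linarith, by linarith⟩
      linarith
  have hqB : ∀ x, χ x * η x = χ x := by
    intro x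
    by_cases h : χ x = 0
    · rw [h, zero_mul]
    · rw [ηo x h, mul_one]
  refine ⟨fun x => 2 * χ x * Real.cos (ψ x),
    fun x => 2 * deriv χ x * Real.cos (ψ x) + 2 * χ x * (- Real.sin (ψ x) * ψ' x),
    fun x => η x * Real.sin (ψ x),
    fun x => deriv η x * Real.sin (ψ x) + η x * (Real.cos (ψ x) * ψ' x),
    fun x => 1 + 2 * deriv χ x * Real.cos (ψ x),
    fun x => 2 * χ x * ψ' x, ?_, ?_, ?_, ?_, ?_, ?_, ?_, ?_, ?_, ?_, ?_, ?_, ?_, ?_⟩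
  · exact (contDiff_const.mul cχ).mul (Real.contDiff_cos.comp cψ)
  · exact cη.mul (Real.contDiff_sin.comp cψ)
  · intro x
    exact ((dχ x).const_mul 2).mul (dψ x).cos
  · intro x
    exact (dη x).mul (dψ x).sin
  · have := cψ.continuous
    fun_prop
  · have := cχ.continuous
    fun_prop
  · intro x hx
    refine ⟨?_, ?_⟩
    · have : χ x = 0 := χz x (hx.imp (fun h => by linarith) (fun h => by linarith))
      simp [this]
    · simp [ηz x hx]
  · intro x
    rw [abs_mul, abs_of_nonneg (by linarith [χn x] : 0 ≤ 2 * χ x)]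
    nlinarith [Real.abs_cos_le_one (ψ x), abs_nonneg (Real.cos (ψ x)), χn x, χl x]
  · intro x
    rw [abs_mul, abs_of_nonneg (ηn x)]
    nlinarith [Real.abs_sin_le_one (ψ x), abs_nonneg (Real.sin (ψ x)), ηn x, ηl x]
  · intro x
    have := hqB x
    linear_combination (2 * ψ' x * Real.sin (ψ x)) * this
  · intro x
    have h1 : |2 * deriv χ x * Real.cos (ψ x)| ≤ 2 * C := by
      rw [abs_mul, abs_mul, abs_two]
      have := hC x
      rw [Real.norm_eq_abs] at this
      nlinarith [Real.abs_cos_le_one (ψ x), abs_nonneg (Real.cos (ψ x)), abs_nonneg (deriv χ x)]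
    calc _ ≤ |(1:ℝ)| + |2 * deriv χ x * Real.cos (ψ x)| := abs_add_le _ _
      _ ≤ _ := by rw [abs_one]; linarith
  · intro x
    have := χn x
    have := ψ'1 x
    positivity
  · have cf : Continuous fun x => 2 * χ x * ψ' x * (η x * Real.sin (ψ x)) ^ 2 := by
      have := cχ.continuous
      have := cη.continuous
      have := cψ.continuous
      fun_prop
    have h1 : ∫ x in (0:ℝ)..1, 2 * χ x * ψ' x * (η x * Real.sin (ψ x)) ^ 2
        ≤ ∫ x in (-8:ℝ)..8, 2 * χ x * ψ' x * (η x * Real.sin (ψ x)) ^ 2 := by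
      apply intervalIntegral.integral_mono_interval (by norm_num) (by norm_num) (by norm_num)
      · refine Eventually.of_forall fun x => ?_
        have := χn x
        have := ψ'1 x
        simp only [Pi.zero_apply]
        positivity
      · exact cf.intervalIntegrable _ _
    have h2 : ∫ x in (0:ℝ)..1, 2 * χ x * ψ' x * (η x * Real.sin (ψ x)) ^ 2
        = (ψ 1 - Real.sin (2 * ψ 1) / 2) - (ψ 0 - Real.sin (2 * ψ 0) / 2) := by
      apply intervalIntegral.integral_eq_sub_of_hasDerivAt (f := fun x => ψ x - Real.sin (2 * ψ x) / 2)
      · intro x hx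
        rw [uIcc_of_le zero_le_one] at hx
        have hχ1 := χo x hx.1 hx.2
        have := (dψ x).sub ((((dψ x).const_mul 2).sin).div_const 2)
        refine this.congr_deriv ?_
        rw [hχ1, ηo x (by rw [hχ1]; norm_num), Real.cos_two_mul, Real.cos_sq']
        ring
      · exact cf.intervalIntegrable _ _
    refine le_trans ?_ h1
    rw [h2]
    simp only [hψ]
    rw [S0 0 le_rfl, S1 1 le_rfl]
    simp only [mul_zero, add_zero, Real.sin_zero, mul_one]
    have := Real.sin_le_one (2 * (1 + N * (2 * Real.pi)))
    have hpi := Real.pi_gt_three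
    have : (N:ℝ) ≤ N * (2 * Real.pi) := by
      have : (0:ℝ) ≤ N := Nat.cast_nonneg N
      nlinarith
    linarith
  · intro x h
    by_cases hx : χ x = 0
    · exfalso
      simp [hx, dχ0 x hx] at h
    · have h1 := ηo x hx
      by_cases hc : Real.cos (ψ x) = 0
      · exfalso
        have h2 := (hcos x hc).resolve_left hx
        beta_reduce at h
        rw [h2, dχ1 x h2] at h
        have h3 := Real.sin_sq_add_cos_sq (ψ x)
        rw [hc] at h3
        have h4 : Real.sin (ψ x) = 1 ∨ Real.sin (ψ x) = -1 := by
          exact sq_eq_one_iff.mp (by nlinarith)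
        rcases h4 with h4 | h4 <;> rw [h4] at h <;> linarith [ψ'1 x]
      · simp only [h1, dη1 x h1]
        have := ψ'1 x
        have : ψ' x ≠ 0 := by linarith
        simp [hc, this]


/-- The planar loops rescaled to the unit interval. -/
lemma planar_loops_unit : ∃ M₀ : ℝ, ∀ L : ℝ, ∃ a a' b b' p q : ℝ → ℝ,
    ContDiff ℝ (⊤ : ℕ∞) a ∧ ContDiff ℝ (⊤ : ℕ∞) b ∧
    (∀ x, HasDerivAt a (a' x) x) ∧ (∀ x, HasDerivAt b (b' x) x) ∧
    Continuous p ∧ Continuous q ∧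
    (∀ x, x ≤ 3 / 8 ∨ 11 / 16 ≤ x → a x = 0 ∧ b x = 0) ∧
    (∀ x, |a x| ≤ 1 / 8) ∧ (∀ x, |b x| ≤ 1) ∧
    (∀ x, 1 + a' x = p x - q x * b x) ∧ (∀ x, |p x| ≤ M₀) ∧ (∀ x, 0 ≤ q x) ∧
    L ≤ ∫ x in (0:ℝ)..1, q x * b x ^ 2 ∧
    (∀ x, 1 + a' x = 0 → b' x ≠ 0) := by
  obtain ⟨M₀, h⟩ := planar_loops
  refine ⟨M₀, fun L => ?_⟩
  obtain ⟨A, A', B, B', p, q, cA, cB, dA, dB, cp, cq, hz, hA, hB, hpq, hp, hq, hL, him⟩ := h (16 * L)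
  have dτ : ∀ x : ℝ, HasDerivAt (fun t : ℝ => 16 * t - 8) 16 x := fun x => by
    simpa using ((hasDerivAt_id x).const_mul 16).sub_const 8
  have cτ : ContDiff ℝ (⊤ : ℕ∞) (fun t : ℝ => 16 * t - 8) := by fun_prop
  refine ⟨fun t => A (16 * t - 8) / 16, fun t => A' (16 * t - 8), fun t => B (16 * t - 8),
    fun t => B' (16 * t - 8) * 16, fun t => p (16 * t - 8), fun t => q (16 * t - 8),
    (cA.comp cτ).div_const _, cB.comp cτ, ?_, ?_, by fun_prop, by fun_prop, ?_, ?_, fun x => hB _,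
    fun x => hpq _, fun x => hp _, fun x => hq _, ?_, ?_⟩
  · intro x
    have := ((dA (16 * x - 8)).comp x (dτ x)).div_const 16
    refine this.congr_deriv ?_
    ring
  · intro x
    exact (dB (16 * x - 8)).comp x (dτ x)
  · intro x hx
    have := hz (16 * x - 8) (hx.imp (fun h => by linarith) (fun h => by linarith))
    simp [this]
  · intro x
    rw [abs_div, abs_of_pos (by norm_num : (0:ℝ) < 16)]
    linarith [hA (16 * x - 8)]
  · have := intervalIntegral.integral_comp_mul_sub (a := 0) (b := 1)
      (fun x => q x * B x ^ 2) (by norm_num : (16:ℝ) ≠ 0) 8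
    beta_reduce
    rw [this]
    norm_num
    linarith
  · intro x hx
    have := him _ hx
    positivity

lemma w_sin {w : ℝ} (hw : |w| ≤ 1) : 5 / 6 * w ^ 2 ≤ w * Real.sin w := by
  have key : ∀ x : ℝ, 0 ≤ x → x ≤ 1 → 5 / 6 * x ^ 2 ≤ x * Real.sin x := by
    intro x h0 h1
    rcases h0.eq_or_lt with rfl | h0
    · simp
    · have h2 := Real.sin_gt_sub_cube h0
      have h3 : 5 / 6 * x ≤ Real.sin x := by nlinarith [sq_nonneg x, mul_nonneg h0.le h0.le]
      nlinarith
  rcases le_total 0 w with h | h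
  · exact key w h (by rwa [abs_of_nonneg h] at hw)
  · have := key (-w) (by linarith) (by rwa [abs_of_nonpos h] at hw)
    rw [Real.sin_neg] at this
    nlinarith

lemma wG_bound {k m m₀ k₁ w : ℝ} (hk : |k| ≤ k₁) (hm : m₀ ≤ m) (hm0 : 0 < m₀)
    (hw : |w| ≤ 1) (hwk : |w| * k₁ ≤ m₀ / 2) :
    m₀ / 2 * w ^ 2 ≤ w * (k * (Real.cos w - 1) + m * Real.sin w) := by
  have h1 := w_sin hw
  have h2 := Real.one_sub_sq_div_two_le_cos (x := w)
  have h3 := Real.cos_le_one w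
  have h4 : |w * (k * (Real.cos w - 1))| ≤ m₀ / 4 * w ^ 2 := by
    rw [abs_mul, abs_mul, abs_of_nonpos (by linarith : Real.cos w - 1 ≤ 0)]
    have : |w| * |k| ≤ m₀ / 2 :=
      (mul_le_mul_of_nonneg_left hk (abs_nonneg w)).trans hwk
    calc |w| * (|k| * -(Real.cos w - 1)) = (|w| * |k|) * (1 - Real.cos w) := by ring
      _ ≤ m₀ / 2 * (w ^ 2 / 2) := by
        apply mul_le_mul this (by linarith) (by linarith) (by linarith)
      _ = _ := by ring
  have h5 := (abs_le.1 h4).1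
  have h6 : m₀ * (5 / 6 * w ^ 2) ≤ m * (w * Real.sin w) :=
    mul_le_mul hm h1 (by positivity) (by linarith)
  nlinarith [mul_nonneg hm0.le (sq_nonneg w)]

/-- Choice of the planar perturbation realizing a prescribed angle. -/
lemma angle_choice {k m : ℝ → ℝ} {m₀ m₁ k₁ δ : ℝ} (ck : Continuous k) (cm : Continuous m)
    (hm0 : 0 < m₀) (hm : ∀ t ∈ Icc (0:ℝ) 1, m₀ ≤ m t) (hm1 : ∀ t ∈ Icc (0:ℝ) 1, m t ≤ m₁)
    (hk : ∀ t ∈ Icc (0:ℝ) 1, |k t| ≤ k₁)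
    (hδ : 0 < δ) (hδ1 : δ ≤ 1) (hδk : δ * k₁ ≤ m₀ / 2) (θ : ℝ) :
    ∃ u u' b b' : ℝ → ℝ, ContDiff ℝ (⊤ : ℕ∞) u ∧ ContDiff ℝ (⊤ : ℕ∞) b ∧
      (∀ x, HasDerivAt u (u' x) x) ∧ (∀ x, HasDerivAt b (b' x) x) ∧
      (∀ x, x ≤ 3 / 8 ∨ 11 / 16 ≤ x → u x = x ∧ b x = 0) ∧
      (∀ x ∈ Icc (0:ℝ) 1, u x ∈ Icc (0:ℝ) 1) ∧ (∀ x, |b x| ≤ δ) ∧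
      (∀ x, u' x = 0 → b' x ≠ 0) ∧
      ∃ n : ℤ, ∫ t in (0:ℝ)..1, u' t * (k (u t) * Real.cos (b t) + m (u t) * Real.sin (b t))
        = (∫ t in (0:ℝ)..1, k t) - θ + n * (2 * Real.pi) := by
  obtain ⟨M₀, h⟩ := planar_loops_unit
  have hk1 : 0 ≤ k₁ := (abs_nonneg _).trans (hk 0 (by simp))
  have hm10 : 0 ≤ m₁ := by linarith [hm 0 (by simp), hm1 0 (by simp)]
  obtain ⟨a, a', b, b', p, q, ca, cb, da, db, cp, cq, hz, ha, hb, hpq, hp, hq, hL, him⟩ :=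
    h ((M₀ * (2 * k₁ + m₁) + 2 * Real.pi) / (δ * (m₀ / 2)))
  have hM0 : 0 ≤ M₀ := (abs_nonneg _).trans (hp 0)
  have hcm : 0 < δ * (m₀ / 2) := by positivity
  rw [div_le_iff₀ hcm] at hL
  have hucont : Continuous fun x => x + a x := continuous_id.add ca.continuous
  have cbc : Continuous b := cb.continuous
  have cu' : Continuous fun x => 1 + a' x := by
    have : (fun x => 1 + a' x) = fun x => p x - q x * b x := funext hpq
    rw [this]; fun_prop
  have hu : ∀ x ∈ Icc (0:ℝ) 1, x + a x ∈ Icc (0:ℝ) 1 := by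
    intro x hx
    by_cases h : x ≤ 3 / 8 ∨ 11 / 16 ≤ x
    · rw [(hz x h).1, add_zero]; exact hx
    · push Not at h
      have := abs_le.1 (ha x)
      exact ⟨by linarith, by linarith⟩
  -- the angle defect as a function of the scale
  set D : ℝ → ℝ := fun s => ∫ t in (0:ℝ)..1, (1 + a' t) *
    (k (t + a t) * Real.cos (s * b t) + m (t + a t) * Real.sin (s * b t)) with hD
  have cD : Continuous D := by
    apply intervalIntegral.continuous_parametric_intervalIntegral_of_continuous'
    simp only [Function.uncurry_def]
    have h1 : Continuous fun x : ℝ × ℝ => 1 + a' x.2 := cu'.comp continuous_snd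
    have h2 : Continuous fun x : ℝ × ℝ => x.2 + a x.2 := hucont.comp continuous_snd
    have h3 : Continuous fun x : ℝ × ℝ => b x.2 := cbc.comp continuous_snd
    have h4 := ck.comp h2
    have h5 := cm.comp h2
    simp only [Function.comp_def] at h4 h5
    fun_prop
  have hD00 : ∫ t in (0:ℝ)..1, (1 + a' t) * k (t + a t) = ∫ t in (0:ℝ)..1, k t := by
    have := intervalIntegral.integral_comp_mul_deriv (a := 0) (b := 1) (f := fun x => x + a x)
      (f' := fun x => 1 + a' x) (g := k) (fun x _ => (hasDerivAt_id x).add (da x))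
      cu'.continuousOn ck
    rw [(hz 0 (by norm_num)).1, (hz 1 (by norm_num)).1] at this
    simp only [add_zero] at this
    rw [← this]
    congr 1; ext t; simp [mul_comm]
  have hD0 : D 0 = ∫ t in (0:ℝ)..1, k t := by
    simp only [hD, zero_mul, Real.cos_zero, Real.sin_zero, mul_one, mul_zero, add_zero]
    exact hD00
  have hku : Continuous fun t => k (t + a t) := ck.comp hucont
  have hmu : Continuous fun t => m (t + a t) := cm.comp hucont
  have hD1 : D δ ≤ (∫ t in (0:ℝ)..1, k t) - 2 * Real.pi := by
    rw [← hD00, hD]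
    beta_reduce
    have hle : ∫ t in (0:ℝ)..1, ((1 + a' t) *
        (k (t + a t) * Real.cos (δ * b t) + m (t + a t) * Real.sin (δ * b t))
          - (1 + a' t) * k (t + a t))
        ≤ ∫ t in (0:ℝ)..1, (M₀ * (2 * k₁ + m₁) - (q t * b t ^ 2) * (δ * (m₀ / 2))) := by
      apply intervalIntegral.integral_mono_on zero_le_one
      · apply Continuous.intervalIntegrable; fun_prop
      · apply Continuous.intervalIntegrable; fun_prop
      · intro t ht
        have hut := hu t ht
        set w := δ * b t with hw
        have hwδ : |w| ≤ δ := by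
          rw [hw, abs_mul, abs_of_pos hδ]
          nlinarith [hb t]
        set G := k (t + a t) * (Real.cos w - 1) + m (t + a t) * Real.sin w with hG
        have h1 := wG_bound (hk _ hut) (hm _ hut) hm0 (hwδ.trans hδ1)
          ((mul_le_mul_of_nonneg_right hwδ hk1).trans hδk)
        rw [← hG] at h1
        have h2 : δ * (m₀ / 2) * b t ^ 2 ≤ b t * G := by
          rw [hw] at h1
          have : δ * (δ * (m₀ / 2) * b t ^ 2) ≤ δ * (b t * G) := by nlinarith
          exact le_of_mul_le_mul_left this hδ
        have h3 : |G| ≤ 2 * k₁ + m₁ := by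
          calc |G| ≤ |k (t + a t) * (Real.cos w - 1)| + |m (t + a t) * Real.sin w| := abs_add_le _ _
            _ ≤ k₁ * 2 + m₁ * 1 := by
              rw [abs_mul, abs_mul]
              have e1 : |Real.cos w - 1| ≤ 2 := by
                rw [abs_le]; constructor <;> linarith [Real.neg_one_le_cos w, Real.cos_le_one w]
              have e2 : |m (t + a t)| ≤ m₁ := by
                rw [abs_of_pos (hm0.trans_le (hm _ hut))]; exact hm1 _ hut
              exact add_le_add (mul_le_mul (hk _ hut) e1 (abs_nonneg _) hk1)
                (mul_le_mul e2 (Real.abs_sin_le_one w) (abs_nonneg _) hm10)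
            _ = _ := by ring
        have h4 : p t * G ≤ M₀ * (2 * k₁ + m₁) := by
          refine (le_abs_self _).trans ?_
          rw [abs_mul]
          exact mul_le_mul (hp t) h3 (abs_nonneg _) hM0
        have h5 := mul_le_mul_of_nonneg_left h2 (hq t)
        calc _ = (1 + a' t) * G := by rw [hG]; ring
          _ = p t * G - q t * (b t * G) := by rw [hpq t]; ring
          _ ≤ M₀ * (2 * k₁ + m₁) - q t * (δ * (m₀ / 2) * b t ^ 2) := by linarith
          _ = _ := by ring
    rw [intervalIntegral.integral_sub (by apply Continuous.intervalIntegrable; fun_prop)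
      (by apply Continuous.intervalIntegrable; fun_prop),
      intervalIntegral.integral_sub (by apply Continuous.intervalIntegrable; fun_prop)
      (by apply Continuous.intervalIntegrable; fun_prop),
      intervalIntegral.integral_mul_const (δ * (m₀ / 2)) (fun t => q t * b t ^ 2),
      intervalIntegral.integral_const] at hle
    simp only [sub_zero, one_smul] at hle
    linarith
  have h2pi : 0 < 2 * Real.pi := Real.two_pi_pos
  have hmod := toIocMod_mem_Ioc h2pi 0 θ
  rw [zero_add] at hmod
  obtain ⟨s, hs, hDs⟩ : ((∫ t in (0:ℝ)..1, k t) - toIocMod h2pi 0 θ) ∈ D '' Icc 0 δ := by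
    apply intermediate_value_Icc' hδ.le cD.continuousOn
    rw [hD0]
    exact ⟨by linarith [hmod.2], by linarith [hmod.1]⟩
  have hs0 : s ≠ 0 := by
    rintro rfl
    rw [hD0] at hDs
    linarith [hmod.1]
  refine ⟨fun x => x + a x, fun x => 1 + a' x, fun x => s * b x, fun x => s * b' x,
    contDiff_id.add ca, contDiff_const.mul cb, fun x => (hasDerivAt_id x).add (da x),
    fun x => (db x).const_mul s, ?_, hu, ?_, ?_, toIocDiv h2pi 0 θ, ?_⟩
  · intro x hx
    simp [hz x hx]
  · intro x
    rw [abs_mul, abs_of_nonneg hs.1]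
    nlinarith [hb x, hs.1, hs.2, abs_nonneg (b x)]
  · intro x hx
    exact mul_ne_zero hs0 (him x hx)
  · have := toIocMod_add_toIocDiv_zsmul h2pi 0 θ
    rw [zsmul_eq_mul] at this
    change D s = _
    rw [hDs]
    linarith


/-- Modifying the parallel transport by adding a loop: given a smooth immersed
curve `β : [0,1] → S²`, an angle `θ` and a (relatively open) neighbourhood `U ∩ S²` of
`β([0,1])` in `S²`, there is a smooth immersed curve `β̃ : [0,1] → U ∩ S²` agreeing with `β`
near `{0,1}` such that `Π_{β̃} = R_{β(1)}^{(θ)} ∘ Π_β`. -/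
theorem statement8
    (β : ℝ → E3) (hβs : ContDiff ℝ (⊤ : ℕ∞) β)
    (hsph : ∀ t ∈ Set.Icc (0:ℝ) 1, ‖β t‖ = 1)
    (himm : ∀ t ∈ Set.Icc (0:ℝ) 1, deriv β t ≠ 0)
    (θ : ℝ) (U : Set E3) (hU : IsOpen U) (hUnbhd : β '' Set.Icc 0 1 ⊆ U) :
    ∃ βt : ℝ → E3, ContDiff ℝ (⊤ : ℕ∞) βt ∧
      (∀ t ∈ Set.Icc (0:ℝ) 1, ‖βt t‖ = 1 ∧ βt t ∈ U ∧ deriv βt t ≠ 0) ∧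
      (∃ ε > (0:ℝ), ∀ t ∈ Set.Icc (0:ℝ) 1, (t < ε ∨ 1 - ε < t) → βt t = β t) ∧
      (∀ (v : E3) (V Vt : ℝ → E3), ⟪v, β 0⟫ = 0 →
        IsParTrans β (deriv β) 0 1 v V → IsParTrans βt (deriv βt) 0 1 v Vt →
        Vt 1 = Real.cos θ • V 1 + Real.sin θ • cross3 (β 1) (V 1)) := by
  obtain ⟨m, hm⟩ : ∃ m : ℝ → ℝ, m = fun u => ‖deriv β u‖ := ⟨_, rfl⟩
  obtain ⟨T, hT⟩ : ∃ T : ℝ → E3, T = fun u => (m u)⁻¹ • deriv β u := ⟨_, rfl⟩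
  obtain ⟨ν, hν⟩ : ∃ ν : ℝ → E3, ν = fun u => cross3 (β u) (T u) := ⟨_, rfl⟩
  have cdβ : ContDiff ℝ (⊤ : ℕ∞) (deriv β) := ContDiff.deriv' hβs
  have cm : Continuous m := by rw [hm]; exact cdβ.continuous.norm
  have mpos : ∀ u ∈ Icc (0:ℝ) 1, 0 < m u := fun u hu => by
    rw [hm]; exact norm_pos_iff.2 (himm u hu)
  have cT : ∀ u ∈ Icc (0:ℝ) 1, ContDiffAt ℝ (⊤ : ℕ∞) T u := by
    intro u hu
    rw [hT, hm]
    exact ((cdβ.contDiffAt.norm ℝ (himm u hu)).inv (norm_ne_zero_iff.2 (himm u hu))).smul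
      cdβ.contDiffAt
  have cν : ∀ u ∈ Icc (0:ℝ) 1, ContDiffAt ℝ (⊤ : ℕ∞) ν u := by
    intro u hu
    rw [hν]
    exact contDiffAt_cross hβs.contDiffAt (cT u hu)
  have dβ : ∀ u, HasDerivAt β (deriv β u) u := fun u =>
    (hβs.differentiable (by simp)).differentiableAt.hasDerivAt
  have dT : ∀ u ∈ Icc (0:ℝ) 1, HasDerivAt T (deriv T u) u := fun u hu =>
    ((cT u hu).differentiableAt (by simp)).hasDerivAt
  have dν : ∀ u ∈ Icc (0:ℝ) 1, HasDerivAt ν (deriv ν u) u := fun u hu =>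
    ((cν u hu).differentiableAt (by simp)).hasDerivAt
  have βT : ∀ u ∈ Icc (0:ℝ) 1, deriv β u = m u • T u := fun u hu => by
    rw [hT, smul_smul, mul_inv_cancel₀ (mpos u hu).ne', one_smul]
  have ββ : ∀ u ∈ Icc (0:ℝ) 1, ⟪β u, β u⟫ = 1 := fun u hu => by
    rw [real_inner_self_eq_norm_sq, hsph u hu]; norm_num
  have Tβ : ∀ u ∈ Icc (0:ℝ) 1, ⟪T u, β u⟫ = 0 := fun u hu => by
    have := deriv_const_Icc hu (((dβ u).inner ℝ (dβ u)).hasDerivWithinAt) ββ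
    rw [real_inner_comm (deriv β u)] at this
    rw [hT, real_inner_smul_left]
    have h2 : ⟪deriv β u, β u⟫ = 0 := by
      have := real_inner_comm (deriv β u) (β u)
      linarith
    rw [h2, mul_zero]
  have TT : ∀ u ∈ Icc (0:ℝ) 1, ⟪T u, T u⟫ = 1 := fun u hu => by
    have h1 := mpos u hu
    rw [hT, real_inner_smul_left, real_inner_smul_right, real_inner_self_eq_norm_sq]
    rw [hm] at h1 ⊢
    field_simp
  have νβ : ∀ u, ⟪ν u, β u⟫ = 0 := fun u => by rw [hν]; exact cross_inner_left _ _
  have νT : ∀ u, ⟪ν u, T u⟫ = 0 := fun u => by rw [hν]; exact cross_inner_right _ _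
  have νν : ∀ u ∈ Icc (0:ℝ) 1, ⟪ν u, ν u⟫ = 1 := fun u hu => by
    rw [hν]; beta_reduce
    rw [cross_inner_self, ββ u hu, TT u hu, real_inner_comm, Tβ u hu]; norm_num
  have βν : ∀ u, ⟪β u, ν u⟫ = 0 := fun u => by rw [real_inner_comm]; exact νβ u
  have Tν : ∀ u, ⟪T u, ν u⟫ = 0 := fun u => by rw [real_inner_comm]; exact νT u
  have βT0 : ∀ u ∈ Icc (0:ℝ) 1, ⟪β u, T u⟫ = 0 := fun u hu => by
    rw [real_inner_comm]; exact Tβ u hu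
  -- structure equations
  have T'β : ∀ u ∈ Icc (0:ℝ) 1, ⟪deriv T u, β u⟫ = - m u := fun u hu => by
    have := deriv_const_Icc hu (((dT u hu).inner ℝ (dβ u)).hasDerivWithinAt) Tβ
    rw [βT u hu, real_inner_smul_right, TT u hu] at this
    linarith
  have ν'T : ∀ u ∈ Icc (0:ℝ) 1, ⟪deriv ν u, T u⟫ = - ⟪deriv T u, ν u⟫ := fun u hu => by
    have := deriv_const_Icc hu (((dν u hu).inner ℝ (dT u hu)).hasDerivWithinAt) (fun s _ => νT s)
    rw [real_inner_comm (deriv T u)] at this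
    have h2 := real_inner_comm (deriv T u) (ν u)
    linarith
  obtain ⟨k, ck, hk⟩ : ∃ k : ℝ → ℝ, Continuous k ∧
      ∀ u ∈ Icc (0:ℝ) 1, ⟪deriv T u, ν u⟫ = k u := by
    have hc : ContinuousOn (fun u => ⟪deriv T u, ν u⟫) (Icc 0 1) := by
      intro u hu
      have h1 : ContinuousAt (deriv T) u := ((cT u hu).derivWithin (m := 0) (by simp)).continuousAt
      exact (h1.inner (cν u hu).continuousAt).continuousWithinAt
    refine ⟨IccExtend zero_le_one (fun x : Icc (0:ℝ) 1 => ⟪deriv T x, ν x⟫),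
      (continuousOn_iff_continuous_domRestrict.1 hc).Icc_extend', fun u hu => ?_⟩
    rw [IccExtend_of_mem _ _ hu]
  -- bounds
  obtain ⟨k₁, hk₁⟩ := isCompact_Icc.exists_bound_of_continuousOn (s := Icc (0:ℝ) 1) ck.continuousOn
  obtain ⟨m₁, hm₁⟩ := isCompact_Icc.exists_bound_of_continuousOn (s := Icc (0:ℝ) 1) cm.continuousOn
  obtain ⟨u₀, hu₀, hmin⟩ := isCompact_Icc.exists_isMinOn (s := Icc (0:ℝ) 1) (by simp) cm.continuousOn
  have hm₀ := mpos u₀ hu₀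
  have hmge : ∀ u ∈ Icc (0:ℝ) 1, m u₀ ≤ m u := fun u hu => hmin hu
  have hk₁0 : 0 ≤ k₁ := (norm_nonneg _).trans (hk₁ 0 (by simp))
  obtain ⟨ε, hε, hεU⟩ := (isCompact_Icc.image hβs.continuous).exists_thickening_subset_open hU hUnbhd
  obtain ⟨δ, hδ, hδ1, hδk, hδε⟩ : ∃ δ > 0, δ ≤ 1 ∧ δ * k₁ ≤ m u₀ / 4 ∧ 2 * δ < ε := by
    refine ⟨min (min 1 (m u₀ / 4 / (k₁ + 1))) (ε / 3), by positivity, ?_, ?_, ?_⟩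
    · exact (min_le_left _ _).trans (min_le_left _ _)
    · have h1 : min (min 1 (m u₀ / 4 / (k₁ + 1))) (ε / 3) ≤ m u₀ / 4 / (k₁ + 1) :=
        (min_le_left _ _).trans (min_le_right _ _)
      rw [le_div_iff₀ (by positivity)] at h1
      have h2 : 0 < min (min 1 (m u₀ / 4 / (k₁ + 1))) (ε / 3) := by positivity
      linarith
    · have := min_le_right (min 1 (m u₀ / 4 / (k₁ + 1))) (ε / 3)
      linarith
  obtain ⟨u, u', b, b', cu, cb, du, db, hub, huI, hbδ, himu, n, hn⟩ :=
    angle_choice ck cm hm₀ hmge (fun t ht => (le_abs_self _).trans (hm₁ t ht)) hk₁ hδ hδ1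
      (by linarith) θ
  obtain ⟨βt, hβt⟩ : ∃ βt : ℝ → E3, βt = fun t =>
    Real.cos (b t) • β (u t) + Real.sin (b t) • ν (u t) := ⟨_, rfl⟩
  obtain ⟨E₂, hE₂⟩ : ∃ E₂ : ℝ → E3, E₂ = fun t =>
    (- Real.sin (b t)) • β (u t) + Real.cos (b t) • ν (u t) := ⟨_, rfl⟩
  have hsame : ∀ t, t ≤ 3 / 8 ∨ 11 / 16 ≤ t → βt t = β t := fun t ht => by
    rw [hβt]; simp [hub t ht]
  have cβu : ContDiff ℝ (⊤ : ℕ∞) fun t => β (u t) := hβs.comp cu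
  have cνu : ∀ t ∈ Icc (0:ℝ) 1, ContDiffAt ℝ (⊤ : ℕ∞) (fun t => ν (u t)) t := fun t ht =>
    ContDiffAt.comp t (cν _ (huI t ht)) cu.contDiffAt
  have ccos : ContDiff ℝ (⊤ : ℕ∞) fun t => Real.cos (b t) := Real.contDiff_cos.comp cb
  have csin : ContDiff ℝ (⊤ : ℕ∞) fun t => Real.sin (b t) := Real.contDiff_sin.comp cb
  have cβt : ContDiff ℝ (⊤ : ℕ∞) βt := by
    rw [contDiff_iff_contDiffAt]
    intro t
    rcases lt_or_ge t (3 / 8) with h | h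
    · refine hβs.contDiffAt.congr_of_eventuallyEq ?_
      filter_upwards [Iio_mem_nhds h] with s hs
      exact hsame s (Or.inl (le_of_lt hs))
    rcases lt_or_ge (11 / 16) t with h' | h'
    · refine hβs.contDiffAt.congr_of_eventuallyEq ?_
      filter_upwards [Ioi_mem_nhds h'] with s hs
      exact hsame s (Or.inr (le_of_lt hs))
    · rw [hβt]
      have ht : t ∈ Icc (0:ℝ) 1 := ⟨by linarith, by linarith⟩
      exact (ccos.contDiffAt.smul cβu.contDiffAt).add (csin.contDiffAt.smul (cνu t ht))
  have dβu : ∀ t, HasDerivAt (fun t => β (u t)) (u' t • deriv β (u t)) t := fun t =>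
    (dβ (u t)).scomp t (du t)
  have dνu : ∀ t ∈ Icc (0:ℝ) 1, HasDerivAt (fun t => ν (u t)) (u' t • deriv ν (u t)) t :=
    fun t ht => (dν (u t) (huI t ht)).scomp t (du t)
  have dTu : ∀ t ∈ Icc (0:ℝ) 1, HasDerivAt (fun t => T (u t)) (u' t • deriv T (u t)) t :=
    fun t ht => (dT (u t) (huI t ht)).scomp t (du t)
  have dβt : ∀ t ∈ Icc (0:ℝ) 1, HasDerivAt βt
      ((Real.cos (b t) • (u' t • deriv β (u t)) + (- Real.sin (b t) * b' t) • β (u t)) +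
       (Real.sin (b t) • (u' t • deriv ν (u t)) + (Real.cos (b t) * b' t) • ν (u t))) t := by
    intro t ht
    rw [hβt]
    exact ((db t).cos.smul (dβu t)).add ((db t).sin.smul (dνu t ht))
  have dE₂ : ∀ t ∈ Icc (0:ℝ) 1, HasDerivAt E₂ (deriv E₂ t) t := by
    intro t ht
    rw [hE₂]
    have := ((db t).sin.neg.smul (dβu t)).add ((db t).cos.smul (dνu t ht))
    exact this.differentiableAt.hasDerivAt
  have hcs : ∀ t, Real.sin (b t) ^ 2 + Real.cos (b t) ^ 2 = 1 := fun t => Real.sin_sq_add_cos_sq _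
  have e33 : ∀ t ∈ Icc (0:ℝ) 1, ⟪βt t, βt t⟫ = 1 := by
    intro t ht
    have hu := huI t ht
    rw [hβt]
    simp only [inner_add_left, inner_add_right, real_inner_smul_left, real_inner_smul_right,
      ββ _ hu, νν _ hu, βν, νβ]
    linear_combination hcs t
  have e22 : ∀ t ∈ Icc (0:ℝ) 1, ⟪E₂ t, E₂ t⟫ = 1 := by
    intro t ht
    have hu := huI t ht
    rw [hE₂]
    simp only [inner_add_left, inner_add_right, real_inner_smul_left, real_inner_smul_right,
      ββ _ hu, νν _ hu, βν, νβ]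
    linear_combination hcs t
  have e23 : ∀ t ∈ Icc (0:ℝ) 1, ⟪E₂ t, βt t⟫ = 0 := by
    intro t ht
    have hu := huI t ht
    rw [hE₂, hβt]
    simp only [inner_add_left, inner_add_right, real_inner_smul_left, real_inner_smul_right,
      ββ _ hu, νν _ hu, βν, νβ]
    ring
  have e12 : ∀ t ∈ Icc (0:ℝ) 1, ⟪T (u t), E₂ t⟫ = 0 := by
    intro t ht
    have hu := huI t ht
    rw [hE₂]
    simp only [inner_add_right, real_inner_smul_right, Tβ _ hu, Tν]
    ring
  have e13 : ∀ t ∈ Icc (0:ℝ) 1, ⟪T (u t), βt t⟫ = 0 := by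
    intro t ht
    have hu := huI t ht
    rw [hβt]
    simp only [inner_add_right, real_inner_smul_right, Tβ _ hu, Tν]
    ring
  have cu' : Continuous u' := by
    have : u' = deriv u := funext fun t => (du t).deriv.symm
    rw [this]
    exact cu.continuous_deriv (by simp)
  refine ⟨βt, cβt, ?_, ⟨1 / 4, by norm_num, ?_⟩, ?_⟩
  · intro t ht
    have hu := huI t ht
    refine ⟨?_, ?_, ?_⟩
    · have := e33 t ht
      rw [real_inner_self_eq_norm_sq] at this
      exact (pow_eq_one_iff_of_nonneg (norm_nonneg _) two_ne_zero).1 this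
    · apply hεU
      rw [Metric.mem_thickening_iff]
      refine ⟨β (u t), mem_image_of_mem _ hu, ?_⟩
      rw [dist_eq_norm]
      have h1 : βt t - β (u t) = (Real.cos (b t) - 1) • β (u t) + Real.sin (b t) • ν (u t) := by
        rw [hβt]; module
      have hνn : ‖ν (u t)‖ = 1 := by
        have := νν _ hu
        rw [real_inner_self_eq_norm_sq] at this
        exact (pow_eq_one_iff_of_nonneg (norm_nonneg _) two_ne_zero).1 this
      have hb1 : |b t| ≤ 1 := (hbδ t).trans hδ1
      have h2 : |Real.cos (b t) - 1| ≤ |b t| := by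
        have h3 := Real.one_sub_sq_div_two_le_cos (x := b t)
        rw [abs_of_nonpos (by linarith [Real.cos_le_one (b t)])]
        have h4 := sq_abs (b t)
        nlinarith [abs_nonneg (b t)]
      have h3 : |Real.sin (b t)| ≤ |b t| := Real.abs_sin_le_abs
      rw [h1]
      refine (norm_add_le _ _).trans_lt ?_
      rw [norm_smul, norm_smul, hνn, hsph _ hu, Real.norm_eq_abs, Real.norm_eq_abs]
      linarith [hbδ t]
    · rw [(dβt t ht).deriv]
      intro h0
      have hin : ∀ x : E3, ⟪((Real.cos (b t) • (u' t • deriv β (u t))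
        + (- Real.sin (b t) * b' t) • β (u t)) + (Real.sin (b t) • (u' t • deriv ν (u t))
        + (Real.cos (b t) * b' t) • ν (u t))), x⟫ = 0 := fun x => by rw [h0, inner_zero_left]
      have h1 := hin (T (u t))
      simp only [inner_add_left, real_inner_smul_left, βT _ hu, TT _ hu, βT0 _ hu, νT,
        ν'T _ hu, hk _ hu] at h1
      have h2 : u' t * (m (u t) * Real.cos (b t) - k (u t) * Real.sin (b t)) = 0 := by
        linear_combination h1
      have hb1 : |b t| ≤ 1 := (hbδ t).trans hδ1
      have h3 : 1 / 2 ≤ Real.cos (b t) := by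
        have h3 := Real.one_sub_sq_div_two_le_cos (x := b t)
        have h4 := sq_abs (b t)
        nlinarith [abs_nonneg (b t)]
      have h4 : k (u t) * Real.sin (b t) ≤ m u₀ / 4 := by
        refine (le_abs_self _).trans ?_
        rw [abs_mul, mul_comm]
        refine le_trans (mul_le_mul ((Real.abs_sin_le_abs).trans (hbδ t)) (hk₁ _ hu)
          (abs_nonneg _) hδ.le) hδk
      have h5 : m u₀ * (1 / 2) ≤ m (u t) * Real.cos (b t) :=
        mul_le_mul (hmge _ hu) h3 (by norm_num) (mpos _ hu).le
      have h6 : u' t = 0 := by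
        rcases mul_eq_zero.1 h2 with h | h
        · exact h
        · exfalso; linarith
      have h7 := hin (E₂ t)
      rw [h6, hE₂] at h7
      simp only [inner_add_left, inner_add_right, real_inner_smul_left, real_inner_smul_right,
        ββ _ hu, νν _ hu, βν, νβ, zero_smul, smul_zero, inner_zero_left] at h7
      apply himu t h6
      linear_combination h7 - b' t * hcs t
  · rintro t - (h | h)
    · exact hsame t (Or.inl (by linarith))
    · exact hsame t (Or.inr (by linarith))
  · intro v V Vt hv hV hVt
    have m1 : (1:ℝ) ∈ Icc (0:ℝ) 1 := by simp
    have r1 := parTrans_frame (E₁ := T) (E₁' := deriv T) (E₂ := ν) (E₂' := deriv ν) (ω := k)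
      (fun t _ => (dβ t).hasDerivWithinAt) cdβ.continuous.continuousOn
      (fun t ht => (dT t ht).hasDerivWithinAt) (fun t ht => (dν t ht).hasDerivWithinAt)
      TT νν ββ (fun t _ => Tν t) Tβ (fun t _ => νβ t) ck hk hv hV
    have dβt' : ∀ t, HasDerivAt βt (deriv βt t) t := fun t =>
      (cβt.differentiable (by simp)).differentiableAt.hasDerivAt
    have hβt0 : βt 0 = β 0 := hsame 0 (by norm_num)
    have r2 := parTrans_frame (E₁ := fun t => T (u t)) (E₁' := fun t => u' t • deriv T (u t))
      (E₂ := E₂) (E₂' := deriv E₂)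
      (ω := fun t => u' t * (k (u t) * Real.cos (b t) + m (u t) * Real.sin (b t)))
      (fun t _ => (dβt' t).hasDerivWithinAt) (cβt.continuous_deriv (by simp)).continuousOn
      (fun t ht => (dTu t ht).hasDerivWithinAt) (fun t ht => (dE₂ t ht).hasDerivWithinAt)
      (fun t ht => TT _ (huI t ht)) e22 e33 e12 e13 e23
      (by
        have h1 := ck.comp cu.continuous
        have h2 := cm.comp cu.continuous
        have h3 := cb.continuous
        simp only [Function.comp_def] at h1 h2
        fun_prop)
      (by
        intro t ht
        have hu := huI t ht
        rw [hE₂]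
        simp only [inner_add_right, real_inner_smul_left, real_inner_smul_right, T'β _ hu, hk _ hu]
        ring)
      (by rw [hβt0]; exact hv) hVt
    have hu0 := hub 0 (by norm_num)
    have hu1 := hub 1 (by norm_num)
    have hE0 : E₂ 0 = ν 0 := by rw [hE₂]; simp [hu0]
    have hE1 : E₂ 1 = ν 1 := by rw [hE₂]; simp [hu1]
    rw [hn, hE0, hE1, hu0.1, hu1.1, Real.cos_add_int_mul_two_pi, Real.sin_add_int_mul_two_pi,
      Real.cos_sub, Real.sin_sub] at r2
    have c1 : cross3 (β 1) (T 1) = ν 1 := by rw [hν]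
    have c2 : cross3 (β 1) (ν 1) = - T 1 := by
      rw [hν]; beta_reduce
      rw [cross3_cross3, βT0 1 m1, ββ 1 m1]; simp
    rw [r1, r2, cross_comb, c1, c2]
    module
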